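/- Let c > 0 and let V : [0, ∞) → ℝ be continuous and nonnegative, differentiable on (0, ∞), and suppose V′(t) ≤ −c·√(V(t)) for all t > 0. Then V(t) = 0 for every t ≥ 2·√(V(0))/c. -/

import Mathlib

/-- Finite-time comparison lemma: a nonnegative continuous function on `[0, ∞)`,
differentiable on `(0, ∞)` and satisfying `V' ≤ −c √V` there, vanishes for all
`t ≥ 2 √(V(0)) / c`. -/
theorem stmt13 (c : ℝ) (hc : 0 < c) (V : ℝ → ℝ)
    (hVcont : ContinuousOn V (Set.Ici 0))
    (hVnonneg : ∀ t, 0 ≤ t → 0 ≤ V t)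
    (hVdiff : ∀ t, 0 < t → DifferentiableAt ℝ V t)
    (hVderiv : ∀ t, 0 < t → deriv V t ≤ -c * Real.sqrt (V t)) :
    ∀ t, 2 * Real.sqrt (V 0) / c ≤ t → V t = 0 := by
  intro T hT
  have hT0 : 0 ≤ T := le_trans (by positivity) hT
  by_contra hne
  have hpos : 0 < V T := lt_of_le_of_ne (hVnonneg T hT0) (Ne.symm hne)
  have hanti : AntitoneOn V (Set.Ici 0) := by
    apply antitoneOn_of_deriv_nonpos (convex_Ici 0) hVcont
    · intro x hx
      rw [interior_Ici] at hx
      exact (hVdiff x hx).differentiableWithinAt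
    · intro x hx
      rw [interior_Ici] at hx
      have h1 := hVderiv x hx
      have h2 : 0 ≤ c * Real.sqrt (V x) := by positivity
      linarith
  have hVpos : ∀ x ∈ Set.Icc 0 T, 0 < V x := fun x hx =>
    lt_of_lt_of_le hpos (hanti hx.1 hT0 hx.2)
  have hg : AntitoneOn (fun t => Real.sqrt (V t) + c / 2 * t) (Set.Icc 0 T) := by
    have hd : ∀ x ∈ Set.Ioo 0 T, HasDerivAt (fun t => Real.sqrt (V t) + c / 2 * t)
        (deriv V x / (2 * Real.sqrt (V x)) + c / 2 * 1) x := by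
      intro x hx
      exact ((hVdiff x hx.1).hasDerivAt.sqrt (hVpos x ⟨hx.1.le, hx.2.le⟩).ne').add
        ((hasDerivAt_id x).const_mul (c / 2))
    apply antitoneOn_of_deriv_nonpos (convex_Icc 0 T)
    · exact ((hVcont.mono Set.Icc_subset_Ici_self).sqrt).add (by fun_prop)
    · intro x hx
      rw [interior_Icc] at hx
      exact (hd x hx).differentiableAt.differentiableWithinAt
    · intro x hx
      rw [interior_Icc] at hx
      rw [(hd x hx).deriv]
      have hs : 0 < Real.sqrt (V x) := Real.sqrt_pos.2 (hVpos x ⟨hx.1.le, hx.2.le⟩)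
      have h1 : deriv V x / (2 * Real.sqrt (V x)) ≤ -(c / 2) := by
        rw [div_le_iff₀ (by positivity)]
        have := hVderiv x hx.1
        linarith
      linarith
  have h := hg (Set.left_mem_Icc.2 hT0) (Set.right_mem_Icc.2 hT0) hT0
  have hs : 0 < Real.sqrt (V T) := Real.sqrt_pos.2 hpos
  rw [div_le_iff₀ hc] at hT
  simp only at h
  linarith
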